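/- Let V and V' be finite-dimensional ℂ-vector spaces, each equipped with an increasing exhaustive and separated filtration W by subspaces and two decreasing exhaustive and separated filtrations F and F̄ by subspaces. Suppose V' is a direct factor of V compatibly with the filtrations: there are linear maps u : V' → V and r : V → V' with r ∘ u = id_{V'} such that u and r map each filtration step into the corresponding filtration step (u(W_m V') ⊆ W_m V, u(F^p V') ⊆ F^p V, u(F̄^p V') ⊆ F̄^p V, and similarly for r). If the three filtrations (W, F, F̄) on V are opposed, then the three filtrations (W, F, F̄) on V' are opposed. -/

import Mathlib

/-- A trifiltered finite-dimensional `ℂ`-vector space: an increasing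
exhaustive and separated filtration `W` together with two decreasing
exhaustive and separated filtrations `F` and `F̄` by subspaces. -/
structure Trifiltered (V : Type*) [AddCommGroup V] [Module ℂ V] where
  W : ℤ → Submodule ℂ V
  F : ℤ → Submodule ℂ V
  Fbar : ℤ → Submodule ℂ V
  W_mono : Monotone W
  F_anti : Antitone F
  Fbar_anti : Antitone Fbar
  W_separated : ∃ m, W m = ⊥
  W_exhaustive : ∃ m, W m = ⊤
  F_exhaustive : ∃ p, F p = ⊤
  F_separated : ∃ p, F p = ⊥
  Fbar_exhaustive : ∃ p, Fbar p = ⊤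
  Fbar_separated : ∃ p, Fbar p = ⊥

namespace Trifiltered

variable {V : Type*} [AddCommGroup V] [Module ℂ V] (T : Trifiltered V)

/-- The subspace `F^p Gr^W_n V` of `Gr^W_n V = W_n V / W_{n-1} V`, realized as
the image of `F^p V ∩ W_n V` in the quotient `V / W_{n-1} V` (inside which
`Gr^W_n V` sits as the image of `W_n V`). -/
def FGrW (p n : ℤ) : Submodule ℂ (V ⧸ T.W (n - 1)) :=
  (T.F p ⊓ T.W n).map (T.W (n - 1)).mkQ

/-- The subspace `F̄^q Gr^W_n V` of `Gr^W_n V = W_n V / W_{n-1} V`. -/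
def FbarGrW (q n : ℤ) : Submodule ℂ (V ⧸ T.W (n - 1)) :=
  (T.Fbar q ⊓ T.W n).map (T.W (n - 1)).mkQ

/-- Vanishing of the triple graded piece `Gr^q_{F̄} Gr^p_F Gr^W_n V`.
Here `Gr^p_F Gr^W_n V = F^p Gr^W_n V / F^{p+1} Gr^W_n V` carries the
filtration induced by `F̄`, whose `q`-th step is the image of
`F̄^q Gr^W_n V ∩ F^p Gr^W_n V`; its `q`-th graded piece vanishes exactly when
`F̄^q Gr^W_n ∩ F^p Gr^W_n ⊆ (F̄^{q+1} Gr^W_n ∩ F^p Gr^W_n) + F^{p+1} Gr^W_n`. -/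
def GrPieceVanishes (n p q : ℤ) : Prop :=
  T.FbarGrW q n ⊓ T.FGrW p n ≤ (T.FbarGrW (q + 1) n ⊓ T.FGrW p n) ⊔ T.FGrW (p + 1) n

/-- The three filtrations `(W, F, F̄)` are *opposed* if
`Gr^q_{F̄} Gr^p_F Gr^W_n V = 0` whenever `n ≠ p + q`. -/
def Opposed : Prop :=
  ∀ n p q : ℤ, n ≠ p + q → T.GrPieceVanishes n p q

end Trifiltered

/-! A filtered map `u` with a filtered retraction `r` induces on each `Gr^W_n` a map with a
retraction, and both preserve the filtrations induced by `F` and `F̄`. The vanishing of a graded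
piece is an inclusion between submodules built from these filtrations, so it can be tested after
applying the map induced by `u`, and the retraction carries the conclusion back. -/

namespace Trifiltered

section Submodules

variable {R M M' : Type*} [Ring R] [AddCommGroup M] [Module R M] [AddCommGroup M'] [Module R M']

theorem le_of_retract {f : M' →ₗ[R] M} {g : M →ₗ[R] M'} (hgf : g ∘ₗ f = LinearMap.id)
    {P Q : Submodule R M} {P' Q' : Submodule R M'} (hP : P'.map f ≤ P) (hQ : Q.map g ≤ Q')
    (hPQ : P ≤ Q) : P' ≤ Q' :=
  calc
    P' = (P'.map f).map g := by rw [← Submodule.map_comp, hgf, Submodule.map_id]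
    _ ≤ Q.map g := Submodule.map_mono (hP.trans hPQ)
    _ ≤ Q' := hQ

/-- The `p`-th step of the filtration induced by `F` on `Gr^W_n M`, for arbitrary families
`W` and `F` of submodules. As in `Trifiltered.FGrW`, it is realized in `M ⧸ W (n - 1)`. -/
def grFiltration (W F : ℤ → Submodule R M) (p n : ℤ) : Submodule R (M ⧸ W (n - 1)) :=
  (F p ⊓ W n).map (W (n - 1)).mkQ

/-- The vanishing of `Gr^q_{F̄} Gr^p_F Gr^W_n M` for arbitrary families of submodules,
encoded as in `Trifiltered.GrPieceVanishes`. -/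
def GradedPieceVanishes (W F Fbar : ℤ → Submodule R M) (n p q : ℤ) : Prop :=
  grFiltration W Fbar q n ⊓ grFiltration W F p n ≤
    (grFiltration W Fbar (q + 1) n ⊓ grFiltration W F p n) ⊔ grFiltration W F (p + 1) n

/-- Opposedness, as in `Trifiltered.Opposed`, for arbitrary families of submodules of a module
over any ring. -/
def AreOpposed (W F Fbar : ℤ → Submodule R M) : Prop :=
  ∀ n p q : ℤ, n ≠ p + q → GradedPieceVanishes W F Fbar n p q

/-- The map `Gr^W_n M → Gr^W'_n M'` induced by a linear map compatible with `W` and `W'`,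
extended to the ambient quotients `M ⧸ W (n - 1)` and `M' ⧸ W' (n - 1)`. -/
def grMap {W : ℤ → Submodule R M} {W' : ℤ → Submodule R M'} (f : M →ₗ[R] M')
    (hW : ∀ m, (W m).map f ≤ W' m) (n : ℤ) : M ⧸ W (n - 1) →ₗ[R] M' ⧸ W' (n - 1) :=
  (W (n - 1)).mapQ (W' (n - 1)) f (Submodule.map_le_iff_le_comap.mp (hW (n - 1)))

variable {W F Fbar : ℤ → Submodule R M} {W' F' Fbar' : ℤ → Submodule R M'}

theorem grMap_comp_grMap_eq_id {u : M' →ₗ[R] M} {r : M →ₗ[R] M'} (hru : r ∘ₗ u = LinearMap.id)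
    (huW : ∀ m, (W' m).map u ≤ W m) (hrW : ∀ m, (W m).map r ≤ W' m) (n : ℤ) :
    grMap r hrW n ∘ₗ grMap u huW n = LinearMap.id := by
  ext x
  exact congrArg (W' (n - 1)).mkQ (LinearMap.congr_fun hru x)

theorem map_grMap_grFiltration_le {f : M →ₗ[R] M'} (hW : ∀ m, (W m).map f ≤ W' m)
    (hF : ∀ p, (F p).map f ≤ F' p) (p n : ℤ) :
    (grFiltration W F p n).map (grMap f hW n) ≤ grFiltration W' F' p n :=
  calc
    (grFiltration W F p n).map (grMap f hW n)
      = ((F p ⊓ W n).map f).map (W' (n - 1)).mkQ := by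
        rw [grFiltration, grMap, ← Submodule.map_comp, Submodule.mapQ_mkQ, Submodule.map_comp]
    _ ≤ grFiltration W' F' p n :=
        Submodule.map_mono ((Submodule.map_inf_le f).trans (inf_le_inf (hF p) (hW n)))

theorem map_grMap_inf_grFiltration_le {f : M →ₗ[R] M'} (hW : ∀ m, (W m).map f ≤ W' m)
    (hF : ∀ p, (F p).map f ≤ F' p) (hFbar : ∀ q, (Fbar q).map f ≤ Fbar' q) (p q n : ℤ) :
    (grFiltration W Fbar q n ⊓ grFiltration W F p n).map (grMap f hW n) ≤
      grFiltration W' Fbar' q n ⊓ grFiltration W' F' p n :=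
  (Submodule.map_inf_le _).trans <| inf_le_inf
    (map_grMap_grFiltration_le hW hFbar q n) (map_grMap_grFiltration_le hW hF p n)

theorem GradedPieceVanishes.of_retract {u : M' →ₗ[R] M} {r : M →ₗ[R] M'}
    (hru : r ∘ₗ u = LinearMap.id)
    (huW : ∀ m, (W' m).map u ≤ W m) (huF : ∀ p, (F' p).map u ≤ F p)
    (huFbar : ∀ q, (Fbar' q).map u ≤ Fbar q)
    (hrW : ∀ m, (W m).map r ≤ W' m) (hrF : ∀ p, (F p).map r ≤ F' p)
    (hrFbar : ∀ q, (Fbar q).map r ≤ Fbar' q)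
    {n p q : ℤ} (h : GradedPieceVanishes W F Fbar n p q) :
    GradedPieceVanishes W' F' Fbar' n p q := by
  refine le_of_retract (grMap_comp_grMap_eq_id hru huW hrW n)
    (map_grMap_inf_grFiltration_le huW huF huFbar p q n) ?_ h
  rw [Submodule.map_sup]
  exact sup_le_sup (map_grMap_inf_grFiltration_le hrW hrF hrFbar p (q + 1) n)
    (map_grMap_grFiltration_le hrW hrF (p + 1) n)

theorem opposed_of_directFactor_general {u : M' →ₗ[R] M} {r : M →ₗ[R] M'}
    (hru : r ∘ₗ u = LinearMap.id)
    (huW : ∀ m, (W' m).map u ≤ W m) (huF : ∀ p, (F' p).map u ≤ F p)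
    (huFbar : ∀ q, (Fbar' q).map u ≤ Fbar q)
    (hrW : ∀ m, (W m).map r ≤ W' m) (hrF : ∀ p, (F p).map r ≤ F' p)
    (hrFbar : ∀ q, (Fbar q).map r ≤ Fbar' q)
    (h : AreOpposed W F Fbar) : AreOpposed W' F' Fbar' :=
  fun n p q hn ↦ (h n p q hn).of_retract hru huW huF huFbar hrW hrF hrFbar

end Submodules

theorem opposed_iff_areOpposed {V : Type*} [AddCommGroup V] [Module ℂ V] (T : Trifiltered V) :
    T.Opposed ↔ AreOpposed T.W T.F T.Fbar :=
  Iff.rfl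

end Trifiltered

/-- Opposedness of the three filtrations passes to direct factors: if `V'` is a
direct factor of `V` compatibly with the filtrations (via `u : V' → V` and a
retraction `r : V → V'` with `r ∘ u = id`, both mapping each filtration step
into the corresponding one), and the three filtrations on `V` are opposed, then
so are the three filtrations on `V'`.  (Step in the proof of Theorem 5.2.1.) -/
theorem Trifiltered.opposed_of_directFactor
    {V V' : Type*}
    [AddCommGroup V] [Module ℂ V] [FiniteDimensional ℂ V]
    [AddCommGroup V'] [Module ℂ V'] [FiniteDimensional ℂ V']
    (T : Trifiltered V) (T' : Trifiltered V')
    (u : V' →ₗ[ℂ] V) (r : V →ₗ[ℂ] V') (hru : r ∘ₗ u = LinearMap.id)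
    (huW : ∀ m : ℤ, (T'.W m).map u ≤ T.W m)
    (huF : ∀ p : ℤ, (T'.F p).map u ≤ T.F p)
    (huFbar : ∀ p : ℤ, (T'.Fbar p).map u ≤ T.Fbar p)
    (hrW : ∀ m : ℤ, (T.W m).map r ≤ T'.W m)
    (hrF : ∀ p : ℤ, (T.F p).map r ≤ T'.F p)
    (hrFbar : ∀ p : ℤ, (T.Fbar p).map r ≤ T'.Fbar p)
    (hT : T.Opposed) : T'.Opposed :=
  T'.opposed_iff_areOpposed.mpr <| opposed_of_directFactor_general hru huW huF huFbar
    hrW hrF hrFbar (T.opposed_iff_areOpposed.mp hT)
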